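/- arXiv:1612.06546 — 5 statements merged into one kernel-verified Lean document; each statement's English description precedes it below -/
import Mathlib

section
/- There exists a constant C > 0 such that for all sufficiently large even N, all real p with |p| ≤ 1/100, and all natural numbers k ≤ N, one has ((1+p)/2)^k · ((1-p)/2)^{N-k} · C(N, k) ≤ C · e^{2p²N} · 4^{-N} · C(2N, k + N/2), where C(n, m) denotes the binomial coefficient. -/
/-!
Write `N = 2 n` and, by the symmetry `(p, k) ↦ (-p, N - k)`, `k = n + j` with `j ≥ 0`. Comparing
successive ratios, `C(2n, n + j) / C(2n, n)` is smaller than `C(4n, 2n + j) / C(4n, 2n)` by a factor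
`exp (-j² / (4n))`, and the central terms differ by at most a factor `√2` after normalization.
For `|p| ≤ 1` the bias contributes `(1 + p)^(n + j) (1 - p)^(n - j) ≤ exp (2 j p)`, and
`2 j p - j² / (4n) ≤ 4 p² n` because `(j - 4 p n)² ≥ 0`. For `|p| ≥ 1` the bias is at most
`exp (2 n |p|) ≤ exp (4 p² n)` outright.
-/

open Real

lemma monotone_mul_sq_centralBinom_div_four_pow :
    Monotone fun n : ℕ => (n : ℝ) * ((n.centralBinom : ℝ) / 4 ^ n) ^ 2 := by
  refine monotone_nat_of_le_succ fun n => ?_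
  have hrec : ((n : ℝ) + 1) * ((n + 1).centralBinom : ℝ) = 2 * (2 * n + 1) * n.centralBinom := by
    exact_mod_cast Nat.succ_mul_centralBinom_succ n
  have hratio : ((n + 1).centralBinom : ℝ) / 4 ^ (n + 1)
      = (2 * n + 1) / (2 * (n + 1)) * ((n.centralBinom : ℝ) / 4 ^ n) := by
    rw [pow_succ]
    field_simp
    linarith
  have hcoeff : (n : ℝ) ≤ (n + 1) * ((2 * n + 1) / (2 * (n + 1))) ^ 2 := by
    field_simp
    nlinarith
  rw [hratio, mul_pow, ← mul_assoc]
  push_cast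
  gcongr

lemma centralBinom_div_four_pow_le (n : ℕ) :
    (n.centralBinom : ℝ) / 4 ^ n ≤ √2 * ((2 * n).centralBinom / 4 ^ (2 * n)) := by
  rcases n.eq_zero_or_pos with rfl | hn
  · simp
  have hn' : (0 : ℝ) < n := by exact_mod_cast hn
  have hmono := monotone_mul_sq_centralBinom_div_four_pow (show n ≤ 2 * n by lia)
  refine (pow_le_pow_iff_left₀ (by positivity) (by positivity) two_ne_zero).mp ?_
  rw [mul_pow, sq_sqrt zero_le_two]
  refine le_of_mul_le_mul_left ?_ hn'
  simpa only [Nat.cast_mul, Nat.cast_ofNat, mul_assoc, mul_left_comm (n : ℝ)] using hmono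

lemma cast_choose_succ_mul {R : Type*} [Ring R] (m r : ℕ) :
    (m.choose (r + 1) : R) * (r + 1) = m.choose r * (m - r) := by
  rcases le_or_gt r m with h | h
  · rw [← Nat.cast_sub h]
    exact_mod_cast congrArg (Nat.cast (R := R)) (m.choose_succ_right_eq r)
  · simp [Nat.choose_eq_zero_of_lt h, Nat.choose_eq_zero_of_lt (h.trans r.lt_succ_self)]

lemma sub_mul_add_le_exp_mul {x y : ℝ} (hx : 1 ≤ x) (hy : 0 ≤ y) (hyx : y ≤ 2 * x) :
    (x - y) * (2 * x + y + 1) ≤ exp (-((2 * y + 1) / (4 * x))) * ((x + y + 1) * (2 * x - y)) := by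
  set d := (x + y + 1) * (2 * x - y) with hd
  have hd_nonneg : 0 ≤ d := mul_nonneg (by linarith) (by linarith)
  have hd_le : d ≤ 4 * x ^ 2 := by
    -- AM-GM: the two factors of `d` sum to `3 * x + 1 ≤ 4 * x`.
    nlinarith [sq_nonneg (x + y + 1 - (2 * x - y))]
  have hfrac : (2 * y + 1) / (4 * x) * d ≤ (2 * y + 1) * x := by
    calc (2 * y + 1) / (4 * x) * d ≤ (2 * y + 1) / (4 * x) * (4 * x ^ 2) := by gcongr
      _ = (2 * y + 1) * x := by field_simp
  calc (x - y) * (2 * x + y + 1) = d - (2 * y + 1) * x := by rw [hd]; ring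
    _ ≤ (1 - (2 * y + 1) / (4 * x)) * d := by linarith
    _ ≤ exp (-((2 * y + 1) / (4 * x))) * d :=
        mul_le_mul_of_nonneg_right (one_sub_le_exp_neg _) hd_nonneg

lemma choose_succ_mul_choose_le_exp {n j : ℕ} (hj : j < n) :
    ((2 * n).choose (n + j + 1) : ℝ) * (4 * n).choose (2 * n + j)
      ≤ exp (-((2 * j + 1) / (4 * n)))
          * ((2 * n).choose (n + j) * (4 * n).choose (2 * n + j + 1)) := by
  have hj_nonneg : (0 : ℝ) ≤ j := j.cast_nonneg
  have hj_succ_le : (j : ℝ) + 1 ≤ n := by exact_mod_cast hj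
  have hratio := sub_mul_add_le_exp_mul (x := n) (y := j) (by linarith) hj_nonneg (by linarith)
  have hA := cast_choose_succ_mul (R := ℝ) (2 * n) (n + j)
  have hB := cast_choose_succ_mul (R := ℝ) (4 * n) (2 * n + j)
  push_cast at hA hB
  set A := ((2 * n).choose (n + j) : ℝ)
  set A' := ((2 * n).choose (n + j + 1) : ℝ)
  set B := ((4 * n).choose (2 * n + j) : ℝ)
  set B' := ((4 * n).choose (2 * n + j + 1) : ℝ)
  set F := exp (-((2 * j + 1) / (4 * n) : ℝ))
  have hden : (0 : ℝ) < (n + j + 1) * (2 * n - j) := mul_pos (by linarith) (by linarith)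
  refine le_of_mul_le_mul_right ?_ hden
  calc A' * B * ((n + j + 1) * (2 * n - j))
      = A' * (n + j + 1) * (B * (4 * n - (2 * n + j))) := by ring
    _ = A * B' * ((n - j) * (2 * n + j + 1)) := by rw [hA, ← hB]; ring
    _ ≤ A * B' * (F * ((n + j + 1) * (2 * n - j))) := by gcongr
    _ = F * (A * B') * ((n + j + 1) * (2 * n - j)) := by ring

lemma choose_mul_centralBinom_le_exp (n j : ℕ) :
    ((2 * n).choose (n + j) : ℝ) * (2 * n).centralBinom
      ≤ exp (-(j ^ 2 / (4 * n))) * (n.centralBinom * (4 * n).choose (2 * n + j)) := by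
  induction j with
  | zero => simp [Nat.centralBinom, ← mul_assoc]
  | succ j ih =>
    rcases le_or_gt n j with hnj | hjn
    · rw [Nat.choose_eq_zero_of_lt (by lia), Nat.cast_zero, zero_mul]
      positivity
    have hexp : exp (-(((j + 1 : ℕ) : ℝ) ^ 2 / (4 * n)))
        = exp (-(j ^ 2 / (4 * n))) * exp (-((2 * j + 1) / (4 * n))) := by
      rw [← exp_add]
      congr 1
      push_cast
      ring
    have hstep := choose_succ_mul_choose_le_exp hjn
    rw [hexp, ← add_assoc, ← add_assoc]
    set A := ((2 * n).choose (n + j) : ℝ)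
    set A' := ((2 * n).choose (n + j + 1) : ℝ)
    set B := ((4 * n).choose (2 * n + j) : ℝ) with hB
    set B' := ((4 * n).choose (2 * n + j + 1) : ℝ)
    set a := (n.centralBinom : ℝ)
    set b := ((2 * n).centralBinom : ℝ)
    set E := exp (-(j ^ 2 / (4 * n) : ℝ))
    set F := exp (-((2 * j + 1) / (4 * n) : ℝ))
    have hB_pos : 0 < B := by
      rw [hB]
      exact_mod_cast Nat.choose_pos (by lia)
    refine le_of_mul_le_mul_right ?_ hB_pos
    calc A' * b * B = A' * B * b := by ring
      _ ≤ F * (A * B') * b := by gcongr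
      _ = F * B' * (A * b) := by ring
      _ ≤ F * B' * (E * (a * B)) := by gcongr
      _ = E * F * (a * B') * B := by ring

lemma choose_div_four_pow_le_exp (n j : ℕ) :
    ((2 * n).choose (n + j) : ℝ) / 4 ^ n
      ≤ √2 * exp (-(j ^ 2 / (4 * n))) * ((4 * n).choose (2 * n + j) / 4 ^ (2 * n)) := by
  have hb : (0 : ℝ) < (2 * n).centralBinom := by exact_mod_cast (2 * n).centralBinom_pos
  refine le_of_mul_le_mul_right ?_ hb
  calc ((2 * n).choose (n + j) : ℝ) / 4 ^ n * (2 * n).centralBinom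
      = (2 * n).choose (n + j) * (2 * n).centralBinom / 4 ^ n := by ring
    _ ≤ exp (-(j ^ 2 / (4 * n))) * (n.centralBinom * (4 * n).choose (2 * n + j)) / 4 ^ n := by
        gcongr ?_ / _
        exact choose_mul_centralBinom_le_exp n j
    _ = exp (-(j ^ 2 / (4 * n))) * (4 * n).choose (2 * n + j) * (n.centralBinom / 4 ^ n) := by ring
    _ ≤ exp (-(j ^ 2 / (4 * n))) * (4 * n).choose (2 * n + j)
          * (√2 * ((2 * n).centralBinom / 4 ^ (2 * n))) := by
        gcongr ?_ * ?_
        exact centralBinom_div_four_pow_le n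
    _ = √2 * exp (-(j ^ 2 / (4 * n))) * ((4 * n).choose (2 * n + j) / 4 ^ (2 * n))
          * (2 * n).centralBinom := by ring

lemma one_add_pow_mul_one_sub_pow_le_exp_sub {p : ℝ} (hp : |p| ≤ 1) (a b : ℕ) :
    (1 + p) ^ a * (1 - p) ^ b ≤ exp ((a - b) * p) := by
  obtain ⟨hp_ge, hp_le⟩ := abs_le.mp hp
  have hadd : (1 + p) ^ a ≤ exp p ^ a :=
    pow_le_pow_left₀ (by linarith) ((add_comm 1 p).trans_le (add_one_le_exp p)) a
  have hsub : (1 - p) ^ b ≤ exp (-p) ^ b :=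
    pow_le_pow_left₀ (by linarith) (one_sub_le_exp_neg p) b
  calc (1 + p) ^ a * (1 - p) ^ b ≤ exp p ^ a * exp (-p) ^ b :=
        mul_le_mul hadd hsub (pow_nonneg (by linarith) b) (by positivity)
    _ = exp ((a - b) * p) := by
        rw [← exp_nat_mul, ← exp_nat_mul, ← exp_add]
        ring_nf

lemma one_add_pow_mul_one_sub_pow_le_exp_add (p : ℝ) (a b : ℕ) :
    (1 + p) ^ a * (1 - p) ^ b ≤ exp ((a + b) * |p|) := by
  have hexp : 1 + |p| ≤ exp |p| := (add_comm 1 |p|).trans_le (add_one_le_exp |p|)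
  have hadd : |1 + p| ≤ exp |p| := by simpa using (abs_add_le 1 p).trans (by simpa using hexp)
  have hsub : |1 - p| ≤ exp |p| := by simpa using (abs_sub 1 p).trans (by simpa using hexp)
  calc (1 + p) ^ a * (1 - p) ^ b ≤ |1 + p| ^ a * |1 - p| ^ b := by
        rw [← abs_pow, ← abs_pow, ← abs_mul]
        exact le_abs_self _
    _ ≤ exp |p| ^ a * exp |p| ^ b := by gcongr
    _ = exp ((a + b) * |p|) := by rw [← pow_add, ← exp_nat_mul, Nat.cast_add]

lemma one_add_pow_mul_one_sub_pow_le_exp_sq (p : ℝ) {n j : ℕ} (hj : j ≤ n) :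
    (1 + p) ^ (n + j) * (1 - p) ^ (n - j) ≤ exp (4 * p ^ 2 * n + j ^ 2 / (4 * n)) := by
  rcases n.eq_zero_or_pos with rfl | hn
  · simp [Nat.le_zero.mp hj]
  rcases le_total |p| 1 with hp | hp
  · refine (one_add_pow_mul_one_sub_pow_le_exp_sub hp _ _).trans (exp_le_exp.mpr ?_)
    have hsq : 4 * p ^ 2 * n + j ^ 2 / (4 * n) - 2 * j * p = (j - 4 * p * n) ^ 2 / (4 * n) := by
      field_simp
      ring
    have hnonneg : 0 ≤ (j - 4 * p * n) ^ 2 / (4 * n) := by positivity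
    push_cast [hj]
    linarith
  · refine (one_add_pow_mul_one_sub_pow_le_exp_add p _ _).trans (exp_le_exp.mpr ?_)
    have habs : |p| ≤ p ^ 2 := by
      rw [← sq_abs]
      exact le_self_pow₀ hp two_ne_zero
    calc (((n + j : ℕ) : ℝ) + (n - j : ℕ)) * |p| = 2 * |p| * n := by push_cast [hj]; ring
      _ ≤ 4 * p ^ 2 * n := by gcongr; linarith [abs_nonneg p]
      _ ≤ 4 * p ^ 2 * n + j ^ 2 / (4 * n) := le_add_of_nonneg_right (by positivity)

lemma biased_choose_le_of_upper_half (p : ℝ) {n j : ℕ} (hj : j ≤ n) :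
    ((1 + p) / 2) ^ (n + j) * ((1 - p) / 2) ^ (n - j) * ((2 * n).choose (n + j) : ℝ)
      ≤ √2 * exp (4 * p ^ 2 * n) * (1 / 4) ^ (2 * n) * ((4 * n).choose (2 * n + j) : ℝ) := by
  have hpow : (2 : ℝ) ^ (n + j) * 2 ^ (n - j) = 4 ^ n := by
    rw [← pow_add, show n + j + (n - j) = 2 * n by lia, pow_mul]
    norm_num
  calc ((1 + p) / 2) ^ (n + j) * ((1 - p) / 2) ^ (n - j) * ((2 * n).choose (n + j) : ℝ)
      = (1 + p) ^ (n + j) * (1 - p) ^ (n - j) * ((2 * n).choose (n + j) / 4 ^ n) := by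
        rw [div_pow, div_pow, ← hpow]
        ring
    _ ≤ exp (4 * p ^ 2 * n + j ^ 2 / (4 * n))
          * (√2 * exp (-(j ^ 2 / (4 * n))) * ((4 * n).choose (2 * n + j) / 4 ^ (2 * n))) := by
        gcongr ?_ * ?_
        · exact one_add_pow_mul_one_sub_pow_le_exp_sq p hj
        · exact choose_div_four_pow_le_exp n j
    _ = √2 * exp (4 * p ^ 2 * n) * (1 / 4) ^ (2 * n) * ((4 * n).choose (2 * n + j) : ℝ) := by
        rw [exp_add, exp_neg, one_div_pow]
        field_simp

theorem stmt5_general {N k : ℕ} (hN : Even N) (hk : k ≤ N) (p : ℝ) :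
    ((1 + p) / 2) ^ k * ((1 - p) / 2) ^ (N - k) * (N.choose k : ℝ)
      ≤ √2 * exp (2 * p ^ 2 * N) * (1 / 4) ^ N * ((2 * N).choose (k + N / 2) : ℝ) := by
  obtain ⟨n, rfl⟩ := hN.two_dvd
  wlog hnk : n ≤ k generalizing k p
  · have hreflect := this (-p) (Nat.sub_le (2 * n) k) (by lia)
    rwa [neg_sq, sub_neg_eq_add, ← sub_eq_add_neg, Nat.sub_sub_self hk, Nat.choose_symm hk,
      mul_comm (_ ^ (2 * n - k)),
      Nat.choose_symm_of_eq_add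
        (show 2 * (2 * n) = 2 * n - k + 2 * n / 2 + (k + 2 * n / 2) by lia)] at hreflect
  obtain ⟨j, rfl⟩ := Nat.exists_eq_add_of_le hnk
  have hupper := biased_choose_le_of_upper_half p (show j ≤ n by lia)
  rwa [show 2 * n - (n + j) = n - j by lia, show n + j + 2 * n / 2 = 2 * n + j by lia,
    show 2 * (2 * n) = 4 * n by ring, show 2 * p ^ 2 * ((2 * n : ℕ) : ℝ) = 4 * p ^ 2 * n by
      push_cast; ring]

theorem stmt5 :
    ∃ C > (0 : ℝ), ∃ N₀ : ℕ, ∀ N ≥ N₀, Even N →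
      ∀ p : ℝ, |p| ≤ 1 / 100 → ∀ k : ℕ, k ≤ N →
        ((1 + p) / 2) ^ k * ((1 - p) / 2) ^ (N - k) * (N.choose k : ℝ)
          ≤ C * Real.exp (2 * p ^ 2 * N) * (1 / 4) ^ N
              * ((2 * N).choose (k + N / 2) : ℝ) :=
  ⟨√2, by positivity, 0, fun _ _ hN p _ _ hk => stmt5_general hN hk p⟩
end

section
/- For every x ∈ [0,1] and every p ∈ ℝ, one has ln 2 + p·(2x - 1) + h(x) - 2·h(x/2 + 1/4) ≤ p², where h is the binary entropy function measured in nats. -/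
/-- The binary entropy function measured in nats (recall `Real.log 0 = 0` in Mathlib,
which implements the convention `0 · ln 0 = 0`). -/
noncomputable def binEnt (t : ℝ) : ℝ := -t * Real.log t - (1 - t) * Real.log (1 - t)

/-!
Since `h''(t) = -1 / (t (1 - t)) ≤ -4`, the binary entropy `h` is `4`-strongly concave on `[0, 1]`.
As `x / 2 + 1 / 4` is the midpoint of `x` and `1 / 2`, where `h` equals `ln 2`, strong concavity
gives `ln 2 + h(x) - 2 h(x / 2 + 1 / 4) ≤ -(x - 1 / 2) ^ 2`. The right-hand side is the minimum
over `p` of `p ^ 2 - p (2 x - 1)`.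
-/

theorem strongConcaveOn_of_hasDerivWithinAt2_le {D : Set ℝ} (hD : Convex ℝ D) {f f' f'' : ℝ → ℝ}
    {m : ℝ} (hf : ContinuousOn f D)
    (hf' : ∀ x ∈ interior D, HasDerivWithinAt f (f' x) (interior D) x)
    (hf'' : ∀ x ∈ interior D, HasDerivWithinAt f' (f'' x) (interior D) x)
    (hf''_le : ∀ x ∈ interior D, f'' x ≤ -m) : StrongConcaveOn D m f := by
  simp only [strongConcaveOn_iff_convex, Real.norm_eq_abs, sq_abs]
  refine concaveOn_of_hasDerivWithinAt2_nonpos hD (f' := fun x ↦ f' x + m * x)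
    (f'' := fun x ↦ f'' x + m) (by fun_prop) (fun x hx ↦ ?_) (fun x hx ↦ ?_) (fun x hx ↦ ?_)
  · have hsq : HasDerivAt (fun x : ℝ ↦ m / 2 * x ^ 2) (m * x) x :=
      ((hasDerivAt_pow 2 x).const_mul (m / 2)).congr_deriv (by ring)
    exact (hf' x hx).add hsq.hasDerivWithinAt
  · exact (hf'' x hx).add (hasDerivAt_const_mul m).hasDerivWithinAt
  · linarith [hf''_le x hx]

theorem add_add_mul_sq_le_two_mul_midpoint_of_strongConcaveOn {E : Type*}
    [NormedAddCommGroup E] [NormedSpace ℝ E] {s : Set E} {m : ℝ} {f : E → ℝ}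
    (hf : StrongConcaveOn s m f) {x y : E} (hx : x ∈ s) (hy : y ∈ s) :
    f x + f y + m / 4 * ‖x - y‖ ^ 2 ≤ 2 * f (midpoint ℝ x y) := by
  have h : 2⁻¹ * f x + 2⁻¹ * f y + 2⁻¹ * 2⁻¹ * (m / 2 * ‖x - y‖ ^ 2) ≤
      f ((2⁻¹ : ℝ) • x + (2⁻¹ : ℝ) • y) :=
    hf.2 hx hy (by norm_num) (by norm_num) (by norm_num)
  rw [midpoint_eq_smul_add, invOf_eq_inv, smul_add]
  linarith

theorem hasDerivAt_log_one_sub_sub_log {x : ℝ} (h0 : x ≠ 0) (h1 : x ≠ 1) :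
    HasDerivAt (fun x ↦ Real.log (1 - x) - Real.log x) (-1 / (x * (1 - x))) x := by
  have h1' : 1 - x ≠ 0 := sub_ne_zero.mpr h1.symm
  refine ((((hasDerivAt_id' x).const_sub 1).log h1').sub (Real.hasDerivAt_log h0)).congr_deriv ?_
  field_simp
  ring

theorem neg_one_div_mul_one_sub_le {x : ℝ} (h0 : 0 < x) (h1 : x < 1) :
    -1 / (x * (1 - x)) ≤ -4 := by
  rw [div_le_iff₀ (mul_pos h0 (sub_pos.mpr h1))]
  linarith [sq_nonneg (2 * x - 1)]

theorem strongConcaveOn_binEntropy : StrongConcaveOn (Set.Icc 0 1) 4 Real.binEntropy := by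
  refine strongConcaveOn_of_hasDerivWithinAt2_le (convex_Icc 0 1)
    Real.binEntropy_continuous.continuousOn
    (f' := fun x ↦ Real.log (1 - x) - Real.log x) (f'' := fun x ↦ -1 / (x * (1 - x))) ?_ ?_ ?_ <;>
    rw [interior_Icc] <;> rintro x ⟨h0, h1⟩
  · exact (Real.hasDerivAt_binEntropy h0.ne' h1.ne).hasDerivWithinAt
  · exact (hasDerivAt_log_one_sub_sub_log h0.ne' h1.ne).hasDerivWithinAt
  · exact neg_one_div_mul_one_sub_le h0 h1

theorem binEntropy_add_add_sq_le_two_mul_midpoint {x y : ℝ} (hx : x ∈ Set.Icc 0 1)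
    (hy : y ∈ Set.Icc 0 1) :
    Real.binEntropy x + Real.binEntropy y + (x - y) ^ 2 ≤
      2 * Real.binEntropy (midpoint ℝ x y) := by
  simpa using add_add_mul_sq_le_two_mul_midpoint_of_strongConcaveOn
    strongConcaveOn_binEntropy hx hy

theorem binEnt_eq_binEntropy : binEnt = Real.binEntropy := by
  funext t
  simp only [binEnt, Real.binEntropy, Real.log_inv]
  ring

theorem stmt6 :
    ∀ x : ℝ, 0 ≤ x → x ≤ 1 → ∀ p : ℝ,
      Real.log 2 + p * (2 * x - 1) + binEnt x - 2 * binEnt (x / 2 + 1 / 4) ≤ p ^ 2 := by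
  intro x h0 h1 p
  have hmid : midpoint ℝ x 2⁻¹ = x / 2 + 1 / 4 := by
    rw [midpoint_eq_smul_add, invOf_eq_inv, smul_eq_mul]
    ring
  have hgap : Real.binEntropy x + Real.log 2 + (x - 2⁻¹) ^ 2 ≤
      2 * Real.binEntropy (x / 2 + 1 / 4) := by
    rw [← hmid, ← Real.binEntropy_two_inv]
    exact binEntropy_add_add_sq_le_two_mul_midpoint ⟨h0, h1⟩ ⟨by norm_num, by norm_num⟩
  have hp : p * (2 * x - 1) ≤ p ^ 2 + (x - 2⁻¹) ^ 2 := by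
    linarith [two_mul_le_add_sq p (x - 2⁻¹)]
  rw [binEnt_eq_binEntropy]
  linarith
end

section
/- For all ε > 0 and α₀ > 0 there exists δ > 0 such that for every Borel probability measure P on ℝ whose Kullback–Leibler divergence from the standard Gaussian measure γ on ℝ satisfies D(P ‖ γ) < δ, every z ∈ ℝ, and every α with 0 < α ≤ α₀, one has ∫ cosh(α·x + z) dP(x) ≥ e^{α²/2} - ε (where the integral is allowed to be infinite). -/
open MeasureTheory ProbabilityTheory
open scoped ENNReal

open Classical in
/-- The Kullback–Leibler divergence `D(P ‖ Q) = ∫ ln(dP/dQ) dP`, equal to `+∞` when `P` is not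
absolutely continuous with respect to `Q` (or the log-likelihood ratio is not integrable). -/
noncomputable def klDiv (P Q : Measure ℝ) : ℝ≥0∞ :=
  if P ≪ Q ∧ Integrable (fun x => Real.log (P.rnDeriv Q x).toReal) P then
    ENNReal.ofReal (∫ x, Real.log (P.rnDeriv Q x).toReal ∂P)
  else ⊤

/-!
The density `r = dP/dγ` satisfies `(1 - r)₊² ≤ 2 (r log r + 1 - r)`, so by the Cauchy–Schwarz
inequality every nonnegative `g` satisfies `∫ g dγ ≤ ∫ g dP + ‖g‖_{L²(γ)} √(2 D(P ‖ γ))`.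
For `g x = cosh (α x + z)` the mean under `γ` is `exp (α² / 2) cosh z` and the `L²(γ)` norm is at
most `exp (α²) cosh z`; after division by `cosh z ≥ 1` the resulting bound no longer involves `z`.
-/

section KullbackLeibler

open InformationTheory (klFun klFun_apply klFun_zero)

lemma sq_one_sub_div_two_le_klFun {r : ℝ} (hr₀ : 0 ≤ r) (hr₁ : r ≤ 1) :
    (1 - r) ^ 2 / 2 ≤ klFun r := by
  rcases hr₀.eq_or_lt with rfl | hr
  · norm_num [klFun_zero]
  have hlog : (r - r⁻¹) / 2 ≤ Real.log r := by
    rw [← Real.sinh_log hr, Real.sinh_le_self_iff]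
    exact Real.log_nonpos hr₀ hr₁
  calc (1 - r) ^ 2 / 2 = r * ((r - r⁻¹) / 2) + 1 - r := by field_simp; ring
    _ ≤ r * Real.log r + 1 - r := by gcongr
    _ = klFun r := (klFun_apply r).symm

lemma sq_one_tsub_le_two_mul_ofReal_klFun (r : ℝ≥0∞) :
    (1 - r) ^ 2 ≤ 2 * ENNReal.ofReal (klFun r.toReal) := by
  rcases le_total 1 r with hr | hr
  · simp [tsub_eq_zero_of_le hr]
  lift r to NNReal using ne_top_of_le_ne_top ENNReal.one_ne_top hr
  have hr₁ : (r : ℝ) ≤ 1 := mod_cast hr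
  rw [ENNReal.coe_toReal, ← ENNReal.ofReal_coe_nnreal, ← ENNReal.ofReal_one,
    ← ENNReal.ofReal_sub _ r.coe_nonneg, ← ENNReal.ofReal_pow (sub_nonneg.2 hr₁),
    ← ENNReal.ofReal_ofNat, ← ENNReal.ofReal_mul zero_le_two]
  refine ENNReal.ofReal_le_ofReal ?_
  linarith [sq_one_sub_div_two_le_klFun r.coe_nonneg hr₁]

variable {Ω : Type*} [MeasurableSpace Ω] {μ ν : Measure Ω} [IsFiniteMeasure μ] [IsFiniteMeasure ν]

lemma lintegral_sq_one_tsub_rnDeriv_le_two_mul_klDiv :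
    ∫⁻ x, (1 - μ.rnDeriv ν x) ^ 2 ∂ν ≤ 2 * InformationTheory.klDiv μ ν := by
  rw [InformationTheory.klDiv_eq_lintegral_klFun]
  split_ifs
  · rw [← lintegral_const_mul' _ _ ENNReal.ofNat_ne_top]
    exact lintegral_mono fun x ↦ sq_one_tsub_le_two_mul_ofReal_klFun _
  · simp

theorem lintegral_le_lintegral_add_sqrt_mul_sqrt_klDiv {g : Ω → ℝ≥0∞} (hg : AEMeasurable g ν) :
    ∫⁻ x, g x ∂ν ≤ ∫⁻ x, g x ∂μ
      + (∫⁻ x, g x ^ 2 ∂ν) ^ (1 / 2 : ℝ) * (2 * InformationTheory.klDiv μ ν) ^ (1 / 2 : ℝ) := by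
  set r := μ.rnDeriv ν
  have hr : Measurable r := μ.measurable_rnDeriv ν
  have hdensity : ∫⁻ x, r x * g x ∂ν ≤ ∫⁻ x, g x ∂μ := by
    calc ∫⁻ x, r x * g x ∂ν = ∫⁻ x, g x ∂ν.withDensity r :=
          (lintegral_withDensity_eq_lintegral_mul₀ hr.aemeasurable hg).symm
      _ ≤ ∫⁻ x, g x ∂μ := lintegral_mono' (μ.withDensity_rnDeriv_le ν) le_rfl
  have hcauchy : ∫⁻ x, g x * (1 - r x) ∂ν
      ≤ (∫⁻ x, g x ^ 2 ∂ν) ^ (1 / 2 : ℝ) * (∫⁻ x, (1 - r x) ^ 2 ∂ν) ^ (1 / 2 : ℝ) := by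
    simpa only [ENNReal.rpow_two, Pi.mul_apply] using
      ENNReal.lintegral_mul_le_Lp_mul_Lq ν .two_two hg (hr.const_sub 1).aemeasurable
  calc ∫⁻ x, g x ∂ν ≤ ∫⁻ x, (r x * g x + g x * (1 - r x)) ∂ν := by
        refine lintegral_mono fun x ↦ ?_
        rw [mul_comm, ← mul_add]
        exact le_mul_of_one_le_right' le_add_tsub
    _ = ∫⁻ x, r x * g x ∂ν + ∫⁻ x, g x * (1 - r x) ∂ν :=
        lintegral_add_left' (hr.aemeasurable.mul hg) _
    _ ≤ _ := by
        grw [hdensity, hcauchy, lintegral_sq_one_tsub_rnDeriv_le_two_mul_klDiv]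

end KullbackLeibler

lemma klDiv_eq_informationTheory_klDiv {P Q : Measure ℝ} [IsProbabilityMeasure P]
    [IsProbabilityMeasure Q] : klDiv P Q = InformationTheory.klDiv P Q := by
  simp only [klDiv, InformationTheory.klDiv_def, llr_def, probReal_univ, add_sub_cancel_right]
  congr

section Gaussian

variable (m : ℝ) (v : NNReal) (a b : ℝ)

lemma integral_exp_mul_gaussianReal :
    ∫ x, Real.exp (a * x) ∂gaussianReal m v = Real.exp (m * a + v * a ^ 2 / 2) :=
  congrFun mgf_id_gaussianReal a

lemma cosh_mul_add_eq_add_exp_mul (x : ℝ) :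
    Real.cosh (a * x + b)
      = Real.exp b / 2 * Real.exp (a * x) + Real.exp (-b) / 2 * Real.exp (-a * x) := by
  rw [Real.cosh_eq, neg_add, Real.exp_add, Real.exp_add, neg_mul]
  ring

lemma integrable_cosh_mul_add_gaussianReal :
    Integrable (fun x ↦ Real.cosh (a * x + b)) (gaussianReal m v) := by
  simp_rw [cosh_mul_add_eq_add_exp_mul]
  exact ((integrable_exp_mul_gaussianReal a).const_mul _).add
    ((integrable_exp_mul_gaussianReal (-a)).const_mul _)

lemma integral_cosh_mul_add_gaussianReal :
    ∫ x, Real.cosh (a * x + b) ∂gaussianReal m v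
      = Real.cosh (a * m + b) * Real.exp (v * a ^ 2 / 2) := by
  simp_rw [cosh_mul_add_eq_add_exp_mul]
  rw [integral_add ((integrable_exp_mul_gaussianReal a).const_mul _)
    ((integrable_exp_mul_gaussianReal (-a)).const_mul _), integral_const_mul, integral_const_mul,
    integral_exp_mul_gaussianReal, integral_exp_mul_gaussianReal, neg_sq, Real.exp_add,
    Real.exp_add, mul_comm m, mul_comm m]
  ring

lemma lintegral_cosh_mul_add_gaussianReal :
    ∫⁻ x, ENNReal.ofReal (Real.cosh (a * x + b)) ∂gaussianReal m v
      = ENNReal.ofReal (Real.cosh (a * m + b) * Real.exp (v * a ^ 2 / 2)) := by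
  rw [← integral_cosh_mul_add_gaussianReal, ofReal_integral_eq_lintegral_ofReal
    (integrable_cosh_mul_add_gaussianReal m v a b) (.of_forall fun x ↦ (Real.cosh_pos _).le)]

lemma cosh_sq_eq_half_cosh_two_mul_add_half (x : ℝ) :
    Real.cosh x ^ 2 = 2⁻¹ * Real.cosh (2 * x) + 2⁻¹ := by
  linarith [Real.cosh_two_mul x, Real.cosh_sq x]

lemma integrable_sq_cosh_mul_add_gaussianReal :
    Integrable (fun x ↦ Real.cosh (a * x + b) ^ 2) (gaussianReal m v) := by
  simp_rw [cosh_sq_eq_half_cosh_two_mul_add_half, mul_add, ← mul_assoc]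
  exact ((integrable_cosh_mul_add_gaussianReal m v _ _).const_mul _).add (integrable_const _)

lemma integral_sq_cosh_mul_add_gaussianReal_le :
    ∫ x, Real.cosh (a * x + b) ^ 2 ∂gaussianReal m v
      ≤ (Real.cosh (a * m + b) * Real.exp (v * a ^ 2)) ^ 2 := by
  have hexp : 1 ≤ Real.exp (v * a ^ 2) ^ 2 := one_le_pow₀ (Real.one_le_exp (by positivity))
  calc ∫ x, Real.cosh (a * x + b) ^ 2 ∂gaussianReal m v
      = 2⁻¹ * ∫ x, Real.cosh (2 * a * x + 2 * b) ∂gaussianReal m v + 2⁻¹ := by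
        simp_rw [cosh_sq_eq_half_cosh_two_mul_add_half, mul_add, ← mul_assoc]
        rw [integral_add ((integrable_cosh_mul_add_gaussianReal m v _ _).const_mul _)
          (integrable_const _), integral_const_mul, integral_const, probReal_univ, one_smul]
    _ = 2⁻¹ * (Real.cosh (2 * (a * m + b)) * Real.exp (v * a ^ 2) ^ 2) + 2⁻¹ := by
        rw [integral_cosh_mul_add_gaussianReal, ← Real.exp_nat_mul]
        ring_nf
    _ ≤ (2⁻¹ * Real.cosh (2 * (a * m + b)) + 2⁻¹) * Real.exp (v * a ^ 2) ^ 2 := by linarith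
    _ = (Real.cosh (a * m + b) * Real.exp (v * a ^ 2)) ^ 2 := by
        rw [← cosh_sq_eq_half_cosh_two_mul_add_half, mul_pow]

lemma sqrt_lintegral_sq_cosh_mul_add_gaussianReal_le :
    (∫⁻ x, ENNReal.ofReal (Real.cosh (a * x + b)) ^ 2 ∂gaussianReal m v) ^ (1 / 2 : ℝ)
      ≤ ENNReal.ofReal (Real.cosh (a * m + b) * Real.exp (v * a ^ 2)) := by
  rw [one_div, ENNReal.rpow_inv_le_iff two_pos, ENNReal.rpow_two]
  simp_rw [← ENNReal.ofReal_pow (Real.cosh_pos _).le]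
  rw [← ENNReal.ofReal_pow (mul_pos (Real.cosh_pos _) (Real.exp_pos _)).le,
    ← ofReal_integral_eq_lintegral_ofReal (integrable_sq_cosh_mul_add_gaussianReal m v a b)
      (.of_forall fun x ↦ sq_nonneg _)]
  exact ENNReal.ofReal_le_ofReal (integral_sq_cosh_mul_add_gaussianReal_le m v a b)

variable (P : Measure ℝ) [IsFiniteMeasure P]

theorem cosh_mul_exp_sub_mul_sqrt_klDiv_le_lintegral_cosh :
    ENNReal.ofReal (Real.cosh (a * m + b)) * (ENNReal.ofReal (Real.exp (v * a ^ 2 / 2))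
        - ENNReal.ofReal (Real.exp (v * a ^ 2))
          * (2 * InformationTheory.klDiv P (gaussianReal m v)) ^ (1 / 2 : ℝ))
      ≤ ∫⁻ x, ENNReal.ofReal (Real.cosh (a * x + b)) ∂P := by
  have h := lintegral_le_lintegral_add_sqrt_mul_sqrt_klDiv (μ := P) (ν := gaussianReal m v)
    (g := fun x ↦ ENNReal.ofReal (Real.cosh (a * x + b))) (by fun_prop)
  grw [sqrt_lintegral_sq_cosh_mul_add_gaussianReal_le] at h
  rw [lintegral_cosh_mul_add_gaussianReal, ENNReal.ofReal_mul (Real.cosh_pos _).le,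
    ENNReal.ofReal_mul (Real.cosh_pos _).le, mul_assoc] at h
  rwa [ENNReal.mul_sub fun _ _ ↦ ENNReal.ofReal_ne_top, tsub_le_iff_right]

theorem exp_sub_mul_sqrt_klDiv_le_lintegral_cosh :
    ENNReal.ofReal (Real.exp (v * a ^ 2 / 2)) - ENNReal.ofReal (Real.exp (v * a ^ 2))
        * (2 * InformationTheory.klDiv P (gaussianReal m v)) ^ (1 / 2 : ℝ)
      ≤ ∫⁻ x, ENNReal.ofReal (Real.cosh (a * x + b)) ∂P :=
  (le_mul_of_one_le_left' (ENNReal.one_le_ofReal.2 (Real.one_le_cosh _))).trans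
    (cosh_mul_exp_sub_mul_sqrt_klDiv_le_lintegral_cosh m v a b P)

end Gaussian

theorem stmt9 :
    ∀ ε > (0 : ℝ), ∀ α₀ > (0 : ℝ), ∃ δ > (0 : ℝ),
      ∀ P : Measure ℝ, IsProbabilityMeasure P →
        klDiv P (gaussianReal 0 1) < ENNReal.ofReal δ →
        ∀ z : ℝ, ∀ α : ℝ, 0 < α → α ≤ α₀ →
          ENNReal.ofReal (Real.exp (α ^ 2 / 2) - ε)
            ≤ ∫⁻ x, ENNReal.ofReal (Real.cosh (α * x + z)) ∂P := by
  intro ε hε α₀ _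
  refine ⟨(ε / Real.exp (α₀ ^ 2)) ^ 2 / 2, by positivity, fun P _ hkl z α hα hαα₀ ↦ ?_⟩
  rw [klDiv_eq_informationTheory_klDiv] at hkl
  have hsqrt : (2 * InformationTheory.klDiv P (gaussianReal 0 1)) ^ (1 / 2 : ℝ)
      ≤ ENNReal.ofReal (ε / Real.exp (α₀ ^ 2)) := by
    rw [one_div, ENNReal.rpow_inv_le_iff two_pos, ENNReal.rpow_two]
    grw [hkl, ← ENNReal.ofReal_ofNat, ← ENNReal.ofReal_mul zero_le_two,
      mul_div_cancel₀ _ two_ne_zero, ENNReal.ofReal_pow (by positivity)]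
  have herror : ENNReal.ofReal (Real.exp (α ^ 2))
      * (2 * InformationTheory.klDiv P (gaussianReal 0 1)) ^ (1 / 2 : ℝ) ≤ ENNReal.ofReal ε := by
    calc _ ≤ ENNReal.ofReal (Real.exp (α₀ ^ 2)) * ENNReal.ofReal (ε / Real.exp (α₀ ^ 2)) := by
          gcongr
      _ = ENNReal.ofReal ε := by
          rw [← ENNReal.ofReal_mul (Real.exp_pos _).le, mul_div_cancel₀ _ (Real.exp_pos _).ne']
  rw [ENNReal.ofReal_sub _ hε.le]
  calc ENNReal.ofReal (Real.exp (α ^ 2 / 2)) - ENNReal.ofReal ε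
      ≤ ENNReal.ofReal (Real.exp (α ^ 2 / 2)) - ENNReal.ofReal (Real.exp (α ^ 2))
          * (2 * InformationTheory.klDiv P (gaussianReal 0 1)) ^ (1 / 2 : ℝ) := by gcongr
    _ ≤ ∫⁻ x, ENNReal.ofReal (Real.cosh (α * x + z)) ∂P := by
        simpa using exp_sub_mul_sqrt_klDiv_le_lintegral_cosh 0 1 α z P
end

section
/- Let N ≥ 1, let η ∈ [-1,1], and set p = 1 - (2/π)·arccos(η). Then for all sets A, B ⊆ {-1,1}^N, the probability under Ξ_η that (sgn(x), sgn(y)) ∈ A × B equals ξ_p(A × B), where sgn is applied coordinatewise (with any fixed convention at 0, which occurs with probability zero). -/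
open MeasureTheory ProbabilityTheory

/-- The standard Gaussian measure `γ^N` on `ℝ^N`. -/
noncomputable def stdGaussianPi (N : ℕ) : Measure (Fin N → ℝ) :=
  Measure.pi fun _ => gaussianReal 0 1

/-- The measure `Ξ_η` on `ℝ^N × ℝ^N`: `x, z` independent standard Gaussians and
`y = η x + √(1-η²) z`. -/
noncomputable def Xi (N : ℕ) (η : ℝ) : Measure ((Fin N → ℝ) × (Fin N → ℝ)) :=
  Measure.map (fun xz => (xz.1, η • xz.1 + Real.sqrt (1 - η ^ 2) • xz.2))
    ((stdGaussianPi N).prod (stdGaussianPi N))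

/-- Number of coordinates on which `x` and `y` agree. -/
def agree {N : ℕ} (x y : Fin N → Bool) : ℕ :=
  (Finset.univ.filter fun i => x i = y i).card

/-- The probability that `ξ_p` assigns to the pair `(x, y)`. -/
noncomputable def xiMass (N : ℕ) (p : ℝ) (x y : Fin N → Bool) : ℝ :=
  (1 / 2) ^ N * ((1 + p) / 2) ^ agree x y * ((1 - p) / 2) ^ (N - agree x y)

/-- The probability that `(x,y) ∈ A × B` under `ξ_p`. -/
noncomputable def xiProb (N : ℕ) (p : ℝ) (A B : Finset (Fin N → Bool)) : ℝ :=
  ∑ x ∈ A, ∑ y ∈ B, xiMass N p x y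

/-- Coordinatewise sign of a real vector, as a `±1` string encoded by Booleans
(with the convention `sgn 0 = +1`, an event of probability zero). -/
noncomputable def sgnVec {N : ℕ} (x : Fin N → ℝ) : Fin N → Bool := fun i => decide (0 ≤ x i)

/-!
Zipping `x` and `y` turns `Ξ_η` into a product over coordinates of the law of two standard
Gaussians with correlation `η = cos θ`, and `ξ_p` is a product as well, so everything happens in
one coordinate. There `(x, y) = (x, cos θ * x + sin θ * z)` with `(x, z)` a planar standard
Gaussian, whose density is radial. Hence the probability that `x` and `y` are both nonnegative is
the fraction of directions in a wedge of angle `π - θ`, namely `(π - θ) / (2π)`. As both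
marginals are symmetric, this one probability determines those of all four sign patterns.
-/

section RadialDensity

open Real Set

/-- The angles in `(-π, π)` of the rays from the origin contained in a planar cone `S`; they are
read off from the points where the rays meet the unit circle. -/
def angularSection (S : Set (ℝ × ℝ)) : Set ℝ :=
  {φ ∈ Ioo (-π) π | (cos φ, sin φ) ∈ S}

lemma angularSection_univ : angularSection univ = Ioo (-π) π := by
  ext
  simp [angularSection]

lemma measurableSet_angularSection {S : Set (ℝ × ℝ)} (hS : MeasurableSet S) :
    MeasurableSet (angularSection S) :=
  measurableSet_Ioo.inter ((by fun_prop : Measurable fun φ : ℝ => (cos φ, sin φ)) hS)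

lemma setLIntegral_radial_of_smul_mem_iff {f : ℝ → ENNReal} (hf : Measurable f)
    {S : Set (ℝ × ℝ)} (hS : MeasurableSet S)
    (hcone : ∀ r : ℝ, 0 < r → ∀ p : ℝ × ℝ, r • p ∈ S ↔ p ∈ S) :
    ∫⁻ p in S, f (p.1 ^ 2 + p.2 ^ 2)
      = (∫⁻ r in Ioi (0 : ℝ), ENNReal.ofReal r * f (r ^ 2)) * volume (angularSection S) := by
  have hsection := measurableSet_angularSection hS
  have hpolar : ∀ q ∈ Ioi (0 : ℝ) ×ˢ Ioo (-π) π,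
      ENNReal.ofReal q.1 • S.indicator (fun p => f (p.1 ^ 2 + p.2 ^ 2)) (polarCoord.symm q)
        = ENNReal.ofReal q.1 * f (q.1 ^ 2) * (angularSection S).indicator 1 q.2 := by
    rintro ⟨r, φ⟩ ⟨hr, hφ⟩
    have hmem : (r * cos φ, r * sin φ) ∈ S ↔ φ ∈ angularSection S :=
      (hcone r hr (cos φ, sin φ)).trans (and_iff_right hφ).symm
    have hradius : (r * cos φ) ^ 2 + (r * sin φ) ^ 2 = r ^ 2 := by
      linear_combination r ^ 2 * sin_sq_add_cos_sq φ
    by_cases h : φ ∈ angularSection S <;>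
      simp [polarCoord_symm_apply, indicator, hmem, h, hradius]
  calc ∫⁻ p in S, f (p.1 ^ 2 + p.2 ^ 2)
    _ = ∫⁻ q in Ioi (0 : ℝ) ×ˢ Ioo (-π) π,
          ENNReal.ofReal q.1 * f (q.1 ^ 2) * (angularSection S).indicator 1 q.2 := by
      rw [← lintegral_indicator hS, ← lintegral_comp_polarCoord_symm, polarCoord_target]
      exact setLIntegral_congr_fun (measurableSet_Ioi.prod measurableSet_Ioo) hpolar
    _ = (∫⁻ r in Ioi (0 : ℝ), ENNReal.ofReal r * f (r ^ 2))
          * ∫⁻ φ in Ioo (-π) π, (angularSection S).indicator 1 φ := by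
      rw [Measure.volume_eq_prod, ← Measure.prod_restrict]
      exact lintegral_prod_mul (f := fun r => ENNReal.ofReal r * f (r ^ 2)) (by fun_prop)
        (measurable_one.indicator hsection).aemeasurable
    _ = _ := by
      rw [lintegral_indicator_one hsection, Measure.restrict_apply hsection,
        inter_eq_left.2 fun φ hφ => hφ.1]

/-- Integrating over the whole plane shows that the radial factor is `1 / (2π)`. -/
lemma measureReal_eq_volume_angularSection_div {μ : Measure (ℝ × ℝ)} [IsProbabilityMeasure μ]
    {f : ℝ → ENNReal} (hf : Measurable f)
    (hμ : μ = volume.withDensity fun p => f (p.1 ^ 2 + p.2 ^ 2))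
    {S : Set (ℝ × ℝ)} (hS : MeasurableSet S)
    (hcone : ∀ r : ℝ, 0 < r → ∀ p : ℝ × ℝ, r • p ∈ S ↔ p ∈ S) :
    μ.real S = volume.real (angularSection S) / (2 * π) := by
  set C := ∫⁻ r in Ioi (0 : ℝ), ENNReal.ofReal r * f (r ^ 2)
  have hreal {T : Set (ℝ × ℝ)} (hT : MeasurableSet T)
      (hT' : ∀ r : ℝ, 0 < r → ∀ p : ℝ × ℝ, r • p ∈ T ↔ p ∈ T) :
      μ.real T = C.toReal * volume.real (angularSection T) := by
    rw [Measure.real, hμ, withDensity_apply _ hT, setLIntegral_radial_of_smul_mem_iff hf hT hT',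
      ENNReal.toReal_mul, Measure.real]
  have hC : 1 = C.toReal * (2 * π) := by
    have h := hreal MeasurableSet.univ (by simp)
    rwa [probReal_univ, angularSection_univ, Real.volume_real_Ioo_of_le (by linarith [pi_pos]),
      sub_neg_eq_add, ← two_mul] at h
  rw [hreal hS hcone, eq_div_iff (by positivity)]
  linear_combination -volume.real (angularSection S) * hC

end RadialDensity

section PlanarGaussian

open Real Set

lemma gaussianPDF_zero_mul_gaussianPDF_zero (v : NNReal) (x y : ℝ) :
    gaussianPDF 0 v x * gaussianPDF 0 v y
      = ENNReal.ofReal ((2 * π * v)⁻¹ * exp (-(x ^ 2 + y ^ 2) / (2 * v))) := by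
  rw [gaussianPDF, gaussianPDF, ← ENNReal.ofReal_mul (gaussianPDFReal_nonneg 0 v x),
    gaussianPDFReal, gaussianPDFReal, mul_mul_mul_comm, ← exp_add, ← mul_inv,
    mul_self_sqrt (by positivity)]
  ring_nf

lemma gaussianReal_prod_gaussianReal_eq_withDensity {v : NNReal} (hv : v ≠ 0) :
    (gaussianReal 0 v).prod (gaussianReal 0 v)
      = volume.withDensity fun p : ℝ × ℝ =>
          ENNReal.ofReal ((2 * π * v)⁻¹ * exp (-(p.1 ^ 2 + p.2 ^ 2) / (2 * v))) := by
  have hm := measurable_gaussianPDF 0 v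
  rw [gaussianReal_of_var_ne_zero _ hv, prod_withDensity hm hm, ← Measure.volume_eq_prod]
  simp only [gaussianPDF_zero_mul_gaussianPDF_zero]

/-- The wedge in which both `x` and `cos θ * x + sin θ * z` are nonnegative: the intersection of
two half-planes, with opening angle `π - θ` when `0 ≤ θ ≤ π`. -/
def nonnegWedge (θ : ℝ) : Set (ℝ × ℝ) :=
  {p | 0 ≤ p.1 ∧ 0 ≤ cos θ * p.1 + sin θ * p.2}

lemma measurableSet_nonnegWedge (θ : ℝ) : MeasurableSet (nonnegWedge θ) :=
  (measurableSet_le measurable_const measurable_fst).inter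
    (measurableSet_le measurable_const
      ((measurable_fst.const_mul (cos θ)).add (measurable_snd.const_mul (sin θ))))

lemma smul_mem_nonnegWedge_iff (θ : ℝ) {r : ℝ} (hr : 0 < r) (p : ℝ × ℝ) :
    r • p ∈ nonnegWedge θ ↔ p ∈ nonnegWedge θ := by
  have hsecond : cos θ * (r * p.1) + sin θ * (r * p.2) = r * (cos θ * p.1 + sin θ * p.2) := by
    ring
  simp only [nonnegWedge, mem_ofPred_eq, Prod.smul_fst, Prod.smul_snd, smul_eq_mul, hsecond,
    mul_nonneg_iff_of_pos_left hr]

lemma cos_nonneg_iff_abs_le_pi_div_two {φ : ℝ} (hφ : φ ∈ Ioo (-π) π) :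
    0 ≤ cos φ ↔ |φ| ≤ π / 2 := by
  rw [← Angle.cos_coe, Angle.cos_nonneg_iff_abs_toReal_le_pi_div_two,
    Angle.toReal_coe_eq_self_iff.2 ⟨hφ.1, hφ.2.le⟩]

/-- Equality fails only for `θ = π`, where the section also contains `-π / 2`. -/
lemma angularSection_nonnegWedge_ae_eq {θ : ℝ} (h0 : 0 ≤ θ) (hπ : θ ≤ π) :
    angularSection (nonnegWedge θ) =ᵐ[volume] Icc (θ - π / 2) (π / 2) := by
  have hpos := pi_pos
  filter_upwards [Measure.ae_ne volume (-(π / 2))] with φ hne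
  refine propext (?_ : φ ∈ angularSection (nonnegWedge θ) ↔ φ ∈ Icc (θ - π / 2) (π / 2))
  have hmem : φ ∈ angularSection (nonnegWedge θ)
      ↔ φ ∈ Ioo (-π) π ∧ 0 ≤ cos φ ∧ 0 ≤ cos (θ - φ) := by
    rw [cos_sub]; rfl
  rw [hmem]
  constructor
  · rintro ⟨hφ, hcos, hcos_sub⟩
    obtain ⟨hlower, hupper⟩ := abs_le.1 ((cos_nonneg_iff_abs_le_pi_div_two hφ).1 hcos)
    refine ⟨?_, hupper⟩
    by_contra! hlt
    have hlower' := hlower.lt_of_ne' hne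
    exact hcos_sub.not_gt (cos_neg_of_pi_div_two_lt_of_lt (by linarith) (by linarith))
  · rintro ⟨hlower, hupper⟩
    exact ⟨⟨by linarith, by linarith⟩, cos_nonneg_of_mem_Icc ⟨by linarith, hupper⟩,
      cos_nonneg_of_mem_Icc ⟨by linarith, by linarith⟩⟩

lemma gaussianReal_prod_real_nonnegWedge {v : NNReal} (hv : v ≠ 0) {θ : ℝ}
    (h0 : 0 ≤ θ) (hπ : θ ≤ π) :
    ((gaussianReal 0 v).prod (gaussianReal 0 v)).real (nonnegWedge θ) = (π - θ) / (2 * π) := by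
  have hdensity : Measurable fun t : ℝ => ENNReal.ofReal ((2 * π * v)⁻¹ * exp (-t / (2 * v))) := by
    fun_prop
  rw [measureReal_eq_volume_angularSection_div hdensity
      (gaussianReal_prod_gaussianReal_eq_withDensity hv) (measurableSet_nonnegWedge θ)
      fun _ hr => smul_mem_nonnegWedge_iff θ hr,
    measureReal_congr (angularSection_nonnegWedge_ae_eq h0 hπ),
    Real.volume_real_Icc_of_le (by linarith)]
  ring

lemma gaussianReal_real_Ici_zero {v : NNReal} (hv : v ≠ 0) :
    (gaussianReal 0 v).real (Ici 0) = 1 / 2 := by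
  have hwedge : nonnegWedge 0 = Ici 0 ×ˢ univ := by
    ext; simp [nonnegWedge]
  have h := gaussianReal_prod_real_nonnegWedge hv le_rfl pi_pos.le
  rw [hwedge, measureReal_prod_prod, probReal_univ, mul_one] at h
  rw [h]
  field_simp
  ring

end PlanarGaussian

lemma measureReal_decide_mem_eq {Ω : Type*} [MeasurableSpace Ω] {μ : Measure Ω}
    [IsProbabilityMeasure μ] {E F : Set Ω} [DecidablePred (· ∈ E)] [DecidablePred (· ∈ F)]
    (hE : MeasurableSet E) (hF : MeasurableSet F) (hμE : μ.real E = 1 / 2)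
    (hμF : μ.real F = 1 / 2) (a b : Bool) :
    μ.real {ω | decide (ω ∈ E) = a ∧ decide (ω ∈ F) = b}
      = if a = b then μ.real (E ∩ F) else 1 / 2 - μ.real (E ∩ F) := by
  have hE_split := measureReal_inter_add_sdiff (μ := μ) (s := E) hF
  have hF_split := measureReal_inter_add_sdiff (μ := μ) (s := F) hE
  have hEc_split := measureReal_inter_add_sdiff (μ := μ) (s := Eᶜ) hF
  rw [Set.inter_comm] at hF_split
  rw [Set.inter_comm, ← Set.sdiff_eq, probReal_compl_eq_one_sub hE] at hEc_split
  cases a <;> cases b <;> simp only [decide_eq_true_eq, decide_eq_false_iff_not, reduceIte,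
    Bool.false_eq_true, Bool.true_eq_false]
  · change μ.real (Eᶜ \ F) = _
    linarith
  · rw [show {ω | ω ∉ E ∧ ω ∈ F} = F \ E from Set.ext fun _ => and_comm]
    linarith
  · change μ.real (E \ F) = _
    linarith
  · rfl

section CorrelatedGaussian

open Real

/-- The joint law of two standard Gaussians with correlation `η ∈ [-1, 1]`, i.e. the law of one
pair of corresponding coordinates under `Ξ_η`. -/
noncomputable def correlatedGaussian (η : ℝ) : Measure (ℝ × ℝ) :=
  ((gaussianReal 0 1).prod (gaussianReal 0 1)).map
    fun p => (p.1, η * p.1 + √(1 - η ^ 2) * p.2)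

lemma measurable_correlate (η : ℝ) :
    Measurable fun p : ℝ × ℝ => (p.1, η * p.1 + √(1 - η ^ 2) * p.2) := by
  fun_prop

instance (η : ℝ) : IsProbabilityMeasure (correlatedGaussian η) :=
  Measure.isProbabilityMeasure_map (measurable_correlate η).aemeasurable

lemma correlatedGaussian_map_fst (η : ℝ) :
    (correlatedGaussian η).map Prod.fst = gaussianReal 0 1 := by
  rw [correlatedGaussian, Measure.map_map measurable_fst (measurable_correlate η)]
  exact measurePreserving_fst.map_eq

/-- The second coordinate is the first coordinate of a rotated planar standard Gaussian. -/
lemma correlatedGaussian_map_snd {η : ℝ} (h0 : -1 ≤ η) (h1 : η ≤ 1) :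
    (correlatedGaussian η).map Prod.snd = gaussianReal 0 1 := by
  let R : ℝ × ℝ →L[ℝ] ℝ × ℝ := ContinuousLinearMap.rotation (arccos η)
  have hR : ((gaussianReal 0 1).prod (gaussianReal 0 1)).map R
      = (gaussianReal 0 1).prod (gaussianReal 0 1) :=
    IsGaussian.map_rotation_eq_self (by simp) (arccos η)
  have hsnd : Prod.snd ∘ (fun p : ℝ × ℝ => (p.1, η * p.1 + √(1 - η ^ 2) * p.2))
      = Prod.fst ∘ R := by
    ext p
    simp [R, ContinuousLinearMap.rotation_apply, cos_arccos h0 h1, sin_arccos]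
  rw [correlatedGaussian, Measure.map_map measurable_snd (measurable_correlate η), hsnd,
    ← Measure.map_map measurable_fst (by fun_prop), hR]
  exact measurePreserving_fst.map_eq

lemma correlatedGaussian_real_nonneg_nonneg {η : ℝ} (h0 : -1 ≤ η) (h1 : η ≤ 1) :
    (correlatedGaussian η).real ({p | 0 ≤ p.1} ∩ {p | 0 ≤ p.2})
      = (π - arccos η) / (2 * π) := by
  rw [← gaussianReal_prod_real_nonnegWedge one_ne_zero (arccos_nonneg η) (arccos_le_pi η),
    correlatedGaussian, map_measureReal_apply (measurable_correlate η) (by measurability),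
    nonnegWedge, cos_arccos h0 h1, sin_arccos]
  rfl

/-- Sheppard's formula. -/
lemma correlatedGaussian_real_sign_eq {η : ℝ} (h0 : -1 ≤ η) (h1 : η ≤ 1) (a b : Bool) :
    (correlatedGaussian η).real {p | decide (0 ≤ p.1) = a ∧ decide (0 ≤ p.2) = b}
      = (if a = b then π - arccos η else arccos η) / (2 * π) := by
  have hfst : (correlatedGaussian η).real {p | 0 ≤ p.1} = 1 / 2 := by
    rw [← gaussianReal_real_Ici_zero one_ne_zero, ← correlatedGaussian_map_fst η,
      map_measureReal_apply measurable_fst measurableSet_Ici]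
    rfl
  have hsnd : (correlatedGaussian η).real {p | 0 ≤ p.2} = 1 / 2 := by
    rw [← gaussianReal_real_Ici_zero one_ne_zero, ← correlatedGaussian_map_snd h0 h1,
      map_measureReal_apply measurable_snd measurableSet_Ici]
    rfl
  refine (measureReal_decide_mem_eq (measurableSet_le measurable_const measurable_fst)
    (measurableSet_le measurable_const measurable_snd) hfst hsnd a b).trans ?_
  rw [correlatedGaussian_real_nonneg_nonneg h0 h1]
  split_ifs
  · rfl
  · field_simp
    ring

end CorrelatedGaussian

lemma Xi_eq_map_pi_correlatedGaussian (N : ℕ) (η : ℝ) :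
    Xi N η = (Measure.pi fun _ => correlatedGaussian η).map
      (MeasurableEquiv.arrowProdEquivProdArrow ℝ ℝ (Fin N)) := by
  have hzip := (measurePreserving_arrowProdEquivProdArrow ℝ ℝ (Fin N)
    (fun _ => gaussianReal 0 1) (fun _ => gaussianReal 0 1)).map_eq
  have hpi := Measure.pi_map_pi (ι := Fin N)
    (μ := fun _ => (gaussianReal 0 1).prod (gaussianReal 0 1))
    fun _ => (measurable_correlate η).aemeasurable
  simp only [correlatedGaussian]
  rw [← hpi, Xi, stdGaussianPi, ← hzip, Measure.map_map (by fun_prop) (by fun_prop),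
    Measure.map_map (by fun_prop) (by fun_prop)]
  rfl

instance (N : ℕ) (η : ℝ) : IsProbabilityMeasure (Xi N η) := by
  rw [Xi_eq_map_pi_correlatedGaussian]
  exact Measure.isProbabilityMeasure_map (by fun_prop)

lemma measurable_sgnVec {N : ℕ} : Measurable (sgnVec : (Fin N → ℝ) → Fin N → Bool) :=
  measurable_pi_lambda _ fun i => measurable_to_bool <| by
    simpa [sgnVec, Set.preimage] using
      measurableSet_le measurable_const (measurable_pi_apply (X := fun _ => ℝ) i)

lemma agree_le {N : ℕ} (x y : Fin N → Bool) : agree x y ≤ N :=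
  (Finset.card_filter_le _ _).trans_eq (Finset.card_fin N)

lemma card_filter_ne_eq_sub_agree {N : ℕ} (x y : Fin N → Bool) :
    (Finset.univ.filter fun i => x i ≠ y i).card = N - agree x y := by
  have h := Finset.card_filter_add_card_filter_not (s := Finset.univ) fun i => x i = y i
  rw [Finset.card_fin] at h
  exact Nat.eq_sub_of_add_eq' h

lemma xiMass_eq_prod (N : ℕ) (p : ℝ) (x y : Fin N → Bool) :
    xiMass N p x y = ∏ i, if x i = y i then (1 + p) / 4 else (1 - p) / 4 := by
  have hN : ((1 : ℝ) / 2) ^ N = (1 / 2) ^ agree x y * (1 / 2) ^ (N - agree x y) := by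
    rw [← pow_add, Nat.add_sub_of_le (agree_le x y)]
  rw [Finset.prod_ite, Finset.prod_const, Finset.prod_const, card_filter_ne_eq_sub_agree, ← agree,
    xiMass, hN, mul_assoc, mul_mul_mul_comm, ← mul_pow, ← mul_pow]
  ring_nf

lemma Xi_real_sgnVec_eq (N : ℕ) {η : ℝ} (h0 : -1 ≤ η) (h1 : η ≤ 1) (a b : Fin N → Bool) :
    (Xi N η).real {xy | sgnVec xy.1 = a ∧ sgnVec xy.2 = b}
      = xiMass N (1 - (2 / Real.pi) * Real.arccos η) a b := by
  have hmeas : MeasurableSet {xy : (Fin N → ℝ) × (Fin N → ℝ) |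
      sgnVec xy.1 = a ∧ sgnVec xy.2 = b} :=
    ((measurable_sgnVec.comp measurable_fst) (measurableSet_singleton a)).inter
      ((measurable_sgnVec.comp measurable_snd) (measurableSet_singleton b))
  have hbox : MeasurableEquiv.arrowProdEquivProdArrow ℝ ℝ (Fin N) ⁻¹'
        {xy | sgnVec xy.1 = a ∧ sgnVec xy.2 = b}
      = Set.univ.pi fun i => {p | decide (0 ≤ p.1) = a i ∧ decide (0 ≤ p.2) = b i} := by
    ext f
    simp only [Set.mem_preimage, Set.mem_ofPred_eq, Set.mem_univ_pi, forall_and, funext_iff]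
    rfl
  rw [Xi_eq_map_pi_correlatedGaussian, map_measureReal_apply (by fun_prop) hmeas, hbox,
    Measure.real, Measure.pi_pi, ENNReal.toReal_prod, xiMass_eq_prod]
  refine Finset.prod_congr rfl fun i _ =>
    (correlatedGaussian_real_sign_eq h0 h1 (a i) (b i)).trans ?_
  split_ifs <;> field_simp <;> ring

theorem stmt10 :
    ∀ N : ℕ, 1 ≤ N → ∀ η : ℝ, -1 ≤ η → η ≤ 1 →
      ∀ A B : Finset (Fin N → Bool),
        (Xi N η {xy : (Fin N → ℝ) × (Fin N → ℝ) |
            sgnVec xy.1 ∈ A ∧ sgnVec xy.2 ∈ B}).toReal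
          = xiProb N (1 - (2 / Real.pi) * Real.arccos η) A B := by
  intro N _ η h0 h1 A B
  let signs (xy : (Fin N → ℝ) × (Fin N → ℝ)) := (sgnVec xy.1, sgnVec xy.2)
  have hsigns : Measurable signs :=
    (measurable_sgnVec.comp measurable_fst).prodMk (measurable_sgnVec.comp measurable_snd)
  have hset : {xy : (Fin N → ℝ) × (Fin N → ℝ) | sgnVec xy.1 ∈ A ∧ sgnVec xy.2 ∈ B}
      = signs ⁻¹' ↑(A ×ˢ B) := by
    ext; simp [signs]
  have hfiber (a b : Fin N → Bool) :
      signs ⁻¹' {(a, b)} = {xy | sgnVec xy.1 = a ∧ sgnVec xy.2 = b} := by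
    ext; simp [signs]
  rw [hset, ← Measure.real,
    ← sum_measureReal_preimage_singleton _ fun y _ => hsigns (measurableSet_singleton y),
    Finset.sum_product, xiProb]
  simp only [hfiber, Xi_real_sgnVec_eq N h0 h1]
end

section
/- There exist constants ε > 0 and D' ∈ (0,1) such that for all sufficiently large N, every k with N - k ≥ D'·N, and every function q : {-1,1}^k → ℝ, one has E_x[ | q(x_1, …, x_k) - ( (Σ_{i=1}^N x_i) / N )² | ] > ε / N, where the expectation is over x drawn uniformly at random from {-1,1}^N. -/
/-- The sign value `±1` of a Boolean. -/
def sg (b : Bool) : ℝ := if b then 1 else -1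

/-!
Let `T` be a set of coordinates that `q` does not read, and write the linear form as `X + Y`, with
`Y` the part supported on `T`. Flipping the signs in `T` preserves `q` and turns `(X + Y) ^ 2` into
`(X - Y) ^ 2`, which differs from it by `4 * X * Y`; hence the error of `q` is at least
`2 * 𝔼 |X * Y|`. Since `X` and `Y` are independent, Khintchine's inequality bounds this below by a
constant times the product of their standard deviations, which for the normalized sum has the order
of `√(N * #T) / N ^ 2` as long as `T` has at most half of the coordinates.
-/

open Finset
open scoped BigOperators

lemma sg_not (b : Bool) : sg (!b) = -sg b := by cases b <;> simp [sg]

lemma sg_sq (b : Bool) : sg b ^ 2 = 1 := by cases b <;> simp [sg]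

/-- The linear form `∑ i ∈ S, a i * x i` with coefficients `a` in the signs `sg (x i)`, for `i` in
`S`. The cube `{-1, 1} ^ ι` is encoded as `ι → Bool`, and its uniform average is `𝔼 x, _`. -/
def rademacherSum {ι : Type*} (a : ι → ℝ) (S : Finset ι) (x : ι → Bool) : ℝ :=
  ∑ i ∈ S, a i * sg (x i)

lemma dependsOn_rademacherSum {ι : Type*} (a : ι → ℝ) (S : Finset ι) :
    DependsOn (rademacherSum a S) (S : Set ι) :=
  fun _ _ h => sum_congr rfl fun i hi => by rw [h i hi]

section Cube

variable {ι : Type*} [DecidableEq ι]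

/-- The permutation of the cube that negates the coordinates in `S`, the symmetry through which the
independence of the coordinates is used. -/
def flipOn (S : Finset ι) : Equiv.Perm (ι → Bool) :=
  Equiv.piCongrRight fun i => if i ∈ S then Equiv.boolNot else Equiv.refl Bool

lemma flipOn_apply_of_mem {S : Finset ι} {i : ι} (hi : i ∈ S) (x : ι → Bool) :
    flipOn S x i = !x i := by
  simp [flipOn, hi, Equiv.boolNot]

lemma flipOn_apply_of_notMem {S : Finset ι} {i : ι} (hi : i ∉ S) (x : ι → Bool) :
    flipOn S x i = x i := by
  simp [flipOn, hi]

lemma apply_flipOn_of_dependsOn_compl {β : Type*} {f : (ι → Bool) → β} {S : Finset ι}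
    (hf : DependsOn f (S : Set ι)ᶜ) (x : ι → Bool) : f (flipOn S x) = f x :=
  hf fun _ hi => flipOn_apply_of_notMem hi x

lemma rademacherSum_flipOn_self (a : ι → ℝ) (S : Finset ι) (x : ι → Bool) :
    rademacherSum a S (flipOn S x) = -rademacherSum a S x := by
  rw [rademacherSum, rademacherSum, ← sum_neg_distrib]
  refine sum_congr rfl fun i hi => ?_
  rw [flipOn_apply_of_mem hi, sg_not, mul_neg]

lemma rademacherSum_insert {S : Finset ι} {j : ι} (hj : j ∉ S) (a : ι → ℝ) (x : ι → Bool) :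
    rademacherSum a (insert j S) x = a j * sg (x j) + rademacherSum a S x :=
  sum_insert hj

lemma rademacherSum_add_rademacherSum_compl [Fintype ι] (a : ι → ℝ) (S : Finset ι)
    (x : ι → Bool) :
    rademacherSum a S x + rademacherSum a Sᶜ x = ∑ i, a i * sg (x i) :=
  sum_add_sum_compl S _

variable [Fintype ι]

lemma expect_comp_flipOn (S : Finset ι) (F : (ι → Bool) → ℝ) :
    𝔼 x, F (flipOn S x) = 𝔼 x, F x :=
  Fintype.expect_equiv (flipOn S) _ _ fun _ => rfl

lemma expect_mul_sg_eq_zero {i : ι} {F : (ι → Bool) → ℝ} (hF : DependsOn F {i}ᶜ) :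
    𝔼 x, F x * sg (x i) = 0 := by
  have hF' : DependsOn F (({i} : Finset ι) : Set ι)ᶜ := by rwa [coe_singleton]
  have hflip : ∀ x, F (flipOn {i} x) * sg (flipOn {i} x i) = -(F x * sg (x i)) := fun x => by
    rw [apply_flipOn_of_dependsOn_compl hF', flipOn_apply_of_mem (mem_singleton_self i), sg_not,
      mul_neg]
  have hneg := expect_comp_flipOn {i} fun x => F x * sg (x i)
  simp only [hflip, expect_neg_distrib] at hneg
  linarith

lemma expect_mul_comp_rademacherSum_mul_sg_eq_zero {S : Finset ι} {j : ι} (hj : j ∉ S)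
    (a : ι → ℝ) {W : (ι → Bool) → ℝ} (hW : DependsOn W {j}ᶜ) (g : ℝ → ℝ) :
    𝔼 x, W x * g (rademacherSum a S x) * sg (x j) = 0 := by
  refine expect_mul_sg_eq_zero fun x y hxy => ?_
  have hS : rademacherSum a S x = rademacherSum a S y :=
    dependsOn_rademacherSum a S fun i hi => hxy i (ne_of_mem_of_not_mem hi hj)
  rw [hW hxy, hS]

lemma expect_mul_rademacherSum_sq {S : Finset ι} (a : ι → ℝ) {W : (ι → Bool) → ℝ}
    (hW : DependsOn W (S : Set ι)ᶜ) :
    𝔼 x, W x * rademacherSum a S x ^ 2 = (∑ i ∈ S, a i ^ 2) * 𝔼 x, W x := by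
  induction S using Finset.induction_on with
  | empty => simp [rademacherSum]
  | insert j S hj ih =>
    have ih := ih <| hW.mono <| Set.compl_subset_compl.mpr <| coe_subset.mpr <| subset_insert j S
    have hmixed := expect_mul_comp_rademacherSum_mul_sg_eq_zero hj a
      (hW.mono <| Set.compl_subset_compl.mpr <| by simp) fun t => 2 * a j * t
    have hexpand : ∀ x, W x * rademacherSum a (insert j S) x ^ 2 =
        W x * rademacherSum a S x ^ 2 + a j ^ 2 * W x +
          W x * (2 * a j * rademacherSum a S x) * sg (x j) := fun x => by
      rw [rademacherSum_insert hj]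
      linear_combination W x * a j ^ 2 * sg_sq (x j)
    simp only [hexpand, expect_add_distrib, ← mul_expect, hmixed, ih, sum_insert hj]
    ring

lemma expect_mul_rademacherSum_pow_four_le {S : Finset ι} (a : ι → ℝ) {W : (ι → Bool) → ℝ}
    (hW : DependsOn W (S : Set ι)ᶜ) (hW₀ : ∀ x, 0 ≤ W x) :
    𝔼 x, W x * rademacherSum a S x ^ 4 ≤ 3 * (∑ i ∈ S, a i ^ 2) ^ 2 * 𝔼 x, W x := by
  induction S using Finset.induction_on with
  | empty => simp [rademacherSum]
  | insert j S hj ih =>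
    have hWS : DependsOn W (S : Set ι)ᶜ :=
      hW.mono <| Set.compl_subset_compl.mpr <| coe_subset.mpr <| subset_insert j S
    have ih := ih hWS
    have hmixed := expect_mul_comp_rademacherSum_mul_sg_eq_zero hj a
      (hW.mono <| Set.compl_subset_compl.mpr <| by simp) fun t => 4 * a j * t ^ 3 + 4 * a j ^ 3 * t
    have hexpand : ∀ x, W x * rademacherSum a (insert j S) x ^ 4 =
        W x * rademacherSum a S x ^ 4 + 6 * a j ^ 2 * (W x * rademacherSum a S x ^ 2) +
          a j ^ 4 * W x + W x * (4 * a j * rademacherSum a S x ^ 3 +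
            4 * a j ^ 3 * rademacherSum a S x) * sg (x j) := fun x => by
      rw [rademacherSum_insert hj]
      linear_combination W x * (6 * a j ^ 2 * rademacherSum a S x ^ 2 +
        4 * a j ^ 3 * rademacherSum a S x * sg (x j) + a j ^ 4 * (sg (x j) ^ 2 + 1)) * sg_sq (x j)
    have hlast : 0 ≤ a j ^ 4 * 𝔼 x, W x :=
      mul_nonneg (by positivity) (expect_nonneg fun x _ => hW₀ x)
    simp only [hexpand, expect_add_distrib, ← mul_expect, hmixed, sum_insert hj,
      expect_mul_rademacherSum_sq a hWS]
    linarith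

lemma three_mul_sq_mul_sq_sub_pow_four_le {c : ℝ} (hc : 0 ≤ c) (t : ℝ) :
    3 * c ^ 2 * t ^ 2 - t ^ 4 ≤ 2 * c ^ 3 * |t| := by
  have hfactor : 0 ≤ |t| * (|t| - c) ^ 2 * (|t| + 2 * c) := by positivity
  rw [← sq_abs t, ← (by decide : Even 4).pow_abs t]
  linarith

/-- Khintchine's inequality in `L¹`. The weight `W` plays the role of a factor independent of the
sum. -/
lemma sqrt_mul_expect_le_expect_mul_abs_rademacherSum {S : Finset ι} (a : ι → ℝ)
    {W : (ι → Bool) → ℝ} (hW : DependsOn W (S : Set ι)ᶜ) (hW₀ : ∀ x, 0 ≤ W x) :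
    √((∑ i ∈ S, a i ^ 2) / 3) * 𝔼 x, W x ≤ 𝔼 x, W x * |rademacherSum a S x| := by
  set σ := √((∑ i ∈ S, a i ^ 2) / 3)
  have hvar : ∑ i ∈ S, a i ^ 2 = 3 * σ ^ 2 := by
    rw [Real.sq_sqrt (by positivity)]
    ring
  have hσ : 0 ≤ σ := Real.sqrt_nonneg _
  have hfour := expect_mul_rademacherSum_pow_four_le a hW hW₀
  -- For second moment `3 * σ ^ 2` and fourth moment at most `27 * σ ^ 4`, the best `c` is `3 * σ`.
  have hpointwise : ∀ x, 27 * σ ^ 2 * (W x * rademacherSum a S x ^ 2) -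
      W x * rademacherSum a S x ^ 4 ≤ 54 * σ ^ 3 * (W x * |rademacherSum a S x|) := fun x => by
    have := mul_le_mul_of_nonneg_left
      (three_mul_sq_mul_sq_sub_pow_four_le (by positivity : 0 ≤ 3 * σ) (rademacherSum a S x))
      (hW₀ x)
    linarith
  have hexpect := expect_le_expect fun x (_ : x ∈ univ) => hpointwise x
  simp only [expect_sub_distrib, ← mul_expect, expect_mul_rademacherSum_sq a hW, hvar]
    at hexpect hfour
  obtain hσ₀ | hσ₀ := hσ.eq_or_lt
  · rw [← hσ₀, zero_mul]
    exact expect_nonneg fun x _ => mul_nonneg (hW₀ x) (abs_nonneg _)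
  · refine le_of_mul_le_mul_left ?_ (by positivity : 0 < 54 * σ ^ 3)
    linarith

lemma sqrt_mul_sqrt_le_expect_abs_mul_abs_rademacherSum {S T : Finset ι} (hST : Disjoint S T)
    (a : ι → ℝ) :
    √((∑ i ∈ S, a i ^ 2) / 3) * √((∑ i ∈ T, a i ^ 2) / 3) ≤
      𝔼 x, |rademacherSum a S x| * |rademacherSum a T x| := by
  have hT : √((∑ i ∈ T, a i ^ 2) / 3) ≤ 𝔼 x, |rademacherSum a T x| := by
    simpa using sqrt_mul_expect_le_expect_mul_abs_rademacherSum (S := T) a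
      ((dependsOn_const (1 : ℝ)).mono (Set.empty_subset _)) fun _ => zero_le_one
  have hdep : DependsOn (fun x => |rademacherSum a T x|) (S : Set ι)ᶜ := fun _ _ hxy =>
    congrArg abs (dependsOn_rademacherSum a T fun i hi => hxy i (disjoint_right.mp hST hi))
  calc √((∑ i ∈ S, a i ^ 2) / 3) * √((∑ i ∈ T, a i ^ 2) / 3)
      ≤ √((∑ i ∈ S, a i ^ 2) / 3) * 𝔼 x, |rademacherSum a T x| := by gcongr
    _ ≤ 𝔼 x, |rademacherSum a T x| * |rademacherSum a S x| :=
      sqrt_mul_expect_le_expect_mul_abs_rademacherSum a hdep fun _ => abs_nonneg _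
    _ = 𝔼 x, |rademacherSum a S x| * |rademacherSum a T x| := by simp only [mul_comm]

lemma two_mul_expect_abs_mul_abs_le_expect_abs_sub_sq {T : Finset ι} (a : ι → ℝ)
    {q : (ι → Bool) → ℝ} (hq : DependsOn q (T : Set ι)ᶜ) :
    2 * 𝔼 x, |rademacherSum a T x| * |rademacherSum a Tᶜ x| ≤
      𝔼 x, |q x - (∑ i, a i * sg (x i)) ^ 2| := by
  have hcompl : ∀ x, rademacherSum a Tᶜ (flipOn T x) = rademacherSum a Tᶜ x :=
    apply_flipOn_of_dependsOn_compl <| by simpa only [coe_compl] using dependsOn_rademacherSum a Tᶜ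
  have hflip := expect_comp_flipOn T fun x => |q x - (∑ i, a i * sg (x i)) ^ 2|
  simp only [← rademacherSum_add_rademacherSum_compl a T, rademacherSum_flipOn_self, hcompl,
    apply_flipOn_of_dependsOn_compl hq] at hflip ⊢
  have hpointwise : ∀ r u v : ℝ, 4 * (|u| * |v|) ≤ |r - (-u + v) ^ 2| + |r - (u + v) ^ 2| :=
    fun r u v =>
      calc 4 * (|u| * |v|) = |(r - (-u + v) ^ 2) - (r - (u + v) ^ 2)| := by
            rw [← abs_mul, ← abs_of_pos (four_pos : (0 : ℝ) < 4), ← abs_mul]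
            congr 1
            ring
        _ ≤ |r - (-u + v) ^ 2| + |r - (u + v) ^ 2| := abs_sub _ _
  have hexpect := expect_le_expect fun x (_ : x ∈ univ) =>
    hpointwise (q x) (rademacherSum a T x) (rademacherSum a Tᶜ x)
  rw [expect_add_distrib, hflip, ← mul_expect] at hexpect
  linarith

theorem two_thirds_mul_sqrt_le_expect_abs_sub_sq {T : Finset ι} (a : ι → ℝ)
    {q : (ι → Bool) → ℝ} (hq : DependsOn q (T : Set ι)ᶜ) :
    2 / 3 * √((∑ i ∈ T, a i ^ 2) * ∑ i ∈ Tᶜ, a i ^ 2) ≤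
      𝔼 x, |q x - (∑ i, a i * sg (x i)) ^ 2| :=
  calc 2 / 3 * √((∑ i ∈ T, a i ^ 2) * ∑ i ∈ Tᶜ, a i ^ 2)
      = 2 * (√((∑ i ∈ T, a i ^ 2) / 3) * √((∑ i ∈ Tᶜ, a i ^ 2) / 3)) := by
        rw [← Real.sqrt_mul (by positivity), div_mul_div_comm, Real.sqrt_div' _ (by norm_num),
          Real.sqrt_mul_self (by norm_num)]
        ring
    _ ≤ 2 * 𝔼 x, |rademacherSum a T x| * |rademacherSum a Tᶜ x| := by
        gcongr
        exact sqrt_mul_sqrt_le_expect_abs_mul_abs_rademacherSum disjoint_compl_right a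
    _ ≤ 𝔼 x, |q x - (∑ i, a i * sg (x i)) ^ 2| :=
        two_mul_expect_abs_mul_abs_le_expect_abs_sub_sq a hq

lemma exists_subset_card_mul_card_le_five_mul (hι : 2 ≤ Fintype.card ι) (U : Finset ι) :
    ∃ T ⊆ U, Fintype.card ι * #U ≤ 5 * (#T * #Tᶜ) := by
  obtain hU | hU := le_total (2 * #U) (Fintype.card ι)
  · refine ⟨U, Subset.rfl, ?_⟩
    have hcompl := card_add_card_compl U
    nlinarith
  · obtain ⟨T, hTU, hT⟩ := exists_subset_card_eq (s := U) (n := Fintype.card ι / 2) (by omega)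
    refine ⟨T, hTU, ?_⟩
    have hcompl := card_add_card_compl T
    have hUle := card_le_univ U
    obtain hT' | hT' : #Tᶜ = #T ∨ #Tᶜ = #T + 1 := by omega
    · rw [hT'] at hcompl ⊢
      nlinarith
    · rw [hT'] at hcompl ⊢
      have : 1 ≤ #T := by omega
      nlinarith

theorem sqrt_card_mul_card_div_le_expect_abs_sub_sq (hι : 2 ≤ Fintype.card ι) {U : Finset ι}
    {q : (ι → Bool) → ℝ} (hq : DependsOn q (U : Set ι)ᶜ) :
    √(Fintype.card ι * #U) / (4 * Fintype.card ι ^ 2) ≤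
      𝔼 x, |q x - ((∑ i, sg (x i)) / Fintype.card ι) ^ 2| := by
  obtain ⟨T, hTU, hT⟩ := exists_subset_card_mul_card_le_five_mul hι U
  have hTR : (Fintype.card ι : ℝ) * #U ≤ 5 * (#T * #Tᶜ) := by exact_mod_cast hT
  set n := (Fintype.card ι : ℝ)
  have hbound := two_thirds_mul_sqrt_le_expect_abs_sub_sq (fun _ => 1 / n)
    (hq.mono (Set.compl_subset_compl.mpr (coe_subset.mpr hTU)))
  simp only [one_div_mul_eq_div, ← sum_div, sum_const, nsmul_eq_mul] at hbound
  refine le_trans ?_ hbound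
  calc √(n * #U) / (4 * n ^ 2)
      = √(n * #U / 16 / (n ^ 2) ^ 2) := by
        rw [Real.sqrt_div' _ (by positivity), Real.sqrt_sq (by positivity),
          Real.sqrt_div' _ (by norm_num), show (16 : ℝ) = 4 ^ 2 by norm_num,
          Real.sqrt_sq (by norm_num), div_div]
    _ ≤ √((2 / 3) ^ 2 * (#T * (1 / n) ^ 2 * (#Tᶜ * (1 / n) ^ 2))) := by
        gcongr
        calc n * #U / 16 / (n ^ 2) ^ 2 ≤ (2 / 3) ^ 2 * (#T * #Tᶜ) / (n ^ 2) ^ 2 := by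
              gcongr
              linarith [mul_nonneg (#T).cast_nonneg (#Tᶜ).cast_nonneg (α := ℝ)]
          _ = (2 / 3) ^ 2 * (#T * (1 / n) ^ 2 * (#Tᶜ * (1 / n) ^ 2)) := by ring
    _ = 2 / 3 * √(#T * (1 / n) ^ 2 * (#Tᶜ * (1 / n) ^ 2)) := by
        rw [Real.sqrt_mul (by positivity), Real.sqrt_sq (by norm_num)]

end Cube

theorem stmt12_general {D' : ℝ} (hD' : 0 < D') {N : ℕ} (hN : 2 ≤ N) {k : ℕ} (hk : k ≤ N)
    (hkN : D' * N ≤ N - k) (q : (Fin k → Bool) → ℝ) :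
    √D' / 5 / N < (1 / 2 ^ N) * ∑ x : Fin N → Bool,
      |q (fun i => x (Fin.castLE hk i)) - ((∑ i, sg (x i)) / N) ^ 2| := by
  have hN₀ : (0 : ℝ) < N := by positivity
  set K : Finset (Fin N) := univ.map (Fin.castLEEmb hk) with hK
  have hcard : (#Kᶜ : ℝ) = N - k := by simp [hK, card_compl, Nat.cast_sub hk]
  have hq : DependsOn (fun x : Fin N → Bool => q fun i => x (Fin.castLE hk i))
      ((Kᶜ : Finset (Fin N)) : Set (Fin N))ᶜ := fun _ _ hxy =>
    congrArg q (funext fun i => hxy _ (by simp [hK]))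
  have hbound := sqrt_card_mul_card_div_le_expect_abs_sub_sq (by simpa using hN) hq
  rw [Fintype.expect_eq_sum_div_card, hcard] at hbound
  simp only [Fintype.card_fun, Fintype.card_fin, Fintype.card_bool, Nat.cast_pow,
    Nat.cast_ofNat] at hbound
  rw [one_div_mul_eq_div]
  calc √D' / 5 / N < √D' / 4 / N := by gcongr; norm_num
    _ = √(D' * N ^ 2) / (4 * N ^ 2) := by
        rw [Real.sqrt_mul hD'.le, Real.sqrt_sq hN₀.le]
        field_simp
    _ ≤ √(N * (N - k)) / (4 * N ^ 2) := by
        gcongr √?_ / _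
        nlinarith
    _ ≤ _ := hbound

theorem stmt12 :
    ∃ ε > (0 : ℝ), ∃ D' : ℝ, 0 < D' ∧ D' < 1 ∧ ∃ N₀ : ℕ, ∀ N ≥ N₀,
      ∀ k : ℕ, ∀ hk : k ≤ N, (N : ℝ) - k ≥ D' * N →
        ∀ q : (Fin k → Bool) → ℝ,
          (1 / 2 ^ N) * ∑ x : Fin N → Bool,
              |q (fun i => x (Fin.castLE hk i)) - ((∑ i, sg (x i)) / N) ^ 2|
            > ε / N :=
  ⟨√(1 / 2) / 5, by positivity, 1 / 2, by norm_num, by norm_num, 2,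
    fun _ hN _ hk hkN q => stmt12_general (by norm_num) hN hk hkN q⟩
end
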